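/- arXiv:1306.2697 — 2 statements merged into one kernel-verified Lean document; each statement's English description precedes it below -/
import Mathlib

section
/- Probabilistic simulation is a precongruence for Kleene star: for probabilistic automata P and Q, if P ≤ Q then P* ≤ Q*. -/
open scoped ENNReal

namespace PCKA

/-- A probabilistic automaton over the (non-silent) action alphabet `α`, with state
space `σ`.  Transition labels are `Option α`, where `none` plays the role of the
silent action `τ`; `trans x a μ` means `x —a→ μ` where `μ` is a (countably
supported) probability distribution over states, `init` is the initial
distribution and `final` the set of final states. -/
structure PAut (α : Type) (σ : Type) where
  trans : σ → Option α → PMF σ → Prop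
  init : PMF σ
  final : Set σ

/-- The lifting `S̄ ⊆ D(X) × D(Y)` of a relation `S ⊆ X × D(Y)`: `μ S̄ ν` iff there
are weights `p n` summing to `1`, states `x n` and distributions `νs n` with
`μ = Σ_n p n · δ_{x n}`, `x n S νs n` for each `n`, and `ν = Σ_n p n · νs n`. -/
def Lift {X Y : Type} (S : X → PMF Y → Prop) (μ : PMF X) (ν : PMF Y) : Prop :=
  ∃ (p : ℕ → ℝ≥0∞) (x : ℕ → X) (νs : ℕ → PMF Y),
    (∑' n, p n) = 1 ∧
    (∀ s, μ s = ∑' n, p n * (PMF.pure (x n)) s) ∧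
    (∀ n, S (x n) (νs n)) ∧
    (∀ t, ν t = ∑' n, p n * (νs n) t)

/-- The double lifting `T̿ ⊆ D(X) × D(Z)` of a relation `T ⊆ X × Z`, via a weight
function `w`. -/
def DLift {X Z : Type} (T : X → Z → Prop) (μ : PMF X) (ψ : PMF Z) : Prop :=
  ∃ w : X → Z → ℝ≥0∞,
    (∀ x z, 0 < w x z → T x z) ∧
    (∀ x, (∑' z, w x z) = μ x) ∧
    (∀ z, (∑' x, w x z) = ψ z)

/-- Flattening `π : D(D(Y)) → D(Y)`, `π(ψ) = Σ_{ν} ψ(ν)·ν`. -/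
noncomputable def flat {Y : Type} (ψ : PMF (PMF Y)) : PMF Y := ψ.bind id

/-- Single transition step, with the τ-transitions extended by reflexivity
(`x —τ→ δ_x` is always allowed). -/
def step {α σ : Type} (P : PAut α σ) (a : Option α) (x : σ) (μ : PMF σ) : Prop :=
  P.trans x a μ ∨ (a = none ∧ μ = PMF.pure x)

/-- Weak internal moves `⇒`: the reflexive-transitive closure of the lifted
(extended) τ-transition relation on distributions. -/
def WeakTau {α σ : Type} (P : PAut α σ) : PMF σ → PMF σ → Prop :=
  Relation.ReflTransGen (Lift (step P none))

/-- Weak `a`-transition `μ ⇒^a μ'`: `μ ⇒ μ₁ —ā→ μ₂ ⇒ μ'`. -/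
def WeakStep {α σ : Type} (P : PAut α σ) (a : Option α) (μ μ' : PMF σ) : Prop :=
  ∃ μ₁ μ₂, WeakTau P μ μ₁ ∧ Lift (step P a) μ₁ μ₂ ∧ WeakTau P μ₂ μ'

/-- A probabilistic simulation from `P` to `Q` (Deng et al. style). -/
structure IsSimulation {α σ τ' : Type} (P : PAut α σ) (Q : PAut α τ')
    (S : σ → PMF τ' → Prop) : Prop where
  init : ∃ ν₀', WeakTau Q Q.init ν₀' ∧ Lift S P.init ν₀'
  step : ∀ x a μ', P.trans x a μ' → ∀ ν, S x ν →
    ∃ ν', WeakStep Q a ν ν' ∧ Lift S μ' ν'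
  final : ∀ x ν, x ∈ P.final → S x ν →
    ∃ ν', WeakTau Q ν ν' ∧ ∀ y ∈ ν'.support, y ∈ Q.final

/-- A probabilistic weak forward simulation from `P` to `Q` (Segala style). -/
structure IsWFSimulation {α σ τ' : Type} (P : PAut α σ) (Q : PAut α τ')
    (S : σ → PMF τ' → Prop) : Prop where
  init : ∃ ψ₀ : PMF (PMF τ'), DLift S P.init ψ₀ ∧ WeakTau Q Q.init (flat ψ₀)
  step : ∀ x a μ', P.trans x a μ' → ∀ ν, S x ν →
    ∃ ψ : PMF (PMF τ'), WeakStep Q a ν (flat ψ) ∧ DLift S μ' ψ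
  final : ∀ x ν, x ∈ P.final → S x ν →
    ∃ ψ : PMF (PMF τ'), (∀ ρ ∈ ψ.support, ∀ y ∈ ρ.support, y ∈ Q.final) ∧
      WeakTau Q ν (flat ψ)

/-- `P ≤ Q`: there exists a probabilistic simulation from `P` to `Q`. -/
def Sim {α σ τ' : Type} (P : PAut α σ) (Q : PAut α τ') : Prop :=
  ∃ S, IsSimulation P Q S

/-- Simulation equivalence `P ≡ Q`. -/
def SimEquiv {α σ τ' : Type} (P : PAut α σ) (Q : PAut α τ') : Prop :=
  Sim P Q ∧ Sim Q P

/-- Convex combination `p·μ + (1−p)·ν` of two distributions. -/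
noncomputable def mix {X : Type} (p : ℝ≥0∞) (hp : p ≤ 1) (μ ν : PMF X) : PMF X :=
  ⟨fun x => p * μ x + (1 - p) * ν x, by
    refine ENNReal.summable.hasSum_iff.mpr ?_
    rw [ENNReal.tsum_add, ENNReal.tsum_mul_left, ENNReal.tsum_mul_left,
      μ.tsum_coe, ν.tsum_coe, mul_one, mul_one, add_tsub_cancel_of_le hp]⟩

/-- Product distribution `μ × ν`, with `(μ × ν)(x,y) = μ(x)·ν(y)`. -/
noncomputable def pprod {X Y : Type} (μ : PMF X) (ν : PMF Y) : PMF (X × Y) :=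
  μ.bind fun x => ν.map fun y => (x, y)

/-- The skip automaton `1`: one state, no transitions, that state is final. -/
noncomputable def skip (α : Type) : PAut α Unit :=
  ⟨fun _ _ _ => False, PMF.pure (), Set.univ⟩

/-- The deadlock automaton `0`: one state, no transitions, no final state. -/
noncomputable def deadlock (α : Type) : PAut α Unit :=
  ⟨fun _ _ _ => False, PMF.pure (), ∅⟩

/-- Nondeterministic choice `P + Q`: disjoint union of the two automata (realised
by the sum type) plus a fresh initial state `z = none` with `z —τ→ μ₀` and
`z —τ→ ν₀`. -/
noncomputable def nchoice {α σ τ' : Type} (P : PAut α σ) (Q : PAut α τ') :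
    PAut α (Option (σ ⊕ τ')) where
  trans := fun s a μ =>
    match s with
    | none => a = none ∧
        (μ = P.init.map (fun x => some (Sum.inl x)) ∨
         μ = Q.init.map (fun y => some (Sum.inr y)))
    | some (Sum.inl x) => ∃ μ', P.trans x a μ' ∧ μ = μ'.map (fun x => some (Sum.inl x))
    | some (Sum.inr y) => ∃ ν', Q.trans y a ν' ∧ μ = ν'.map (fun y => some (Sum.inr y))
  init := PMF.pure none
  final := {s | (∃ x ∈ P.final, s = some (Sum.inl x)) ∨ (∃ y ∈ Q.final, s = some (Sum.inr y))}

/-- Sequential composition `P · Q`: disjoint union (realised by the sum type),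
with a τ-transition from each final state of `P` to the initial distribution of
`Q`; initial distribution that of `P`, final states those of `Q`. -/
noncomputable def pseq {α σ τ' : Type} (P : PAut α σ) (Q : PAut α τ') :
    PAut α (σ ⊕ τ') where
  trans := fun s a μ =>
    match s with
    | Sum.inl x =>
        (∃ μ', P.trans x a μ' ∧ μ = μ'.map Sum.inl) ∨
        (a = none ∧ x ∈ P.final ∧ μ = Q.init.map Sum.inr)
    | Sum.inr y => ∃ ν', Q.trans y a ν' ∧ μ = ν'.map Sum.inr
  init := P.init.map Sum.inl
  final := {s | ∃ y ∈ Q.final, s = Sum.inr y}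

/-- Kleene star `P*`: a fresh state `z = none` which is initial and the only
final state, with `z —τ→ μ₀` and `x —τ→ δ_z` for each final state `x` of `P`. -/
noncomputable def pstar {α σ : Type} (P : PAut α σ) : PAut α (Option σ) where
  trans := fun s a μ =>
    match s with
    | none => a = none ∧ μ = P.init.map some
    | some x =>
        (∃ μ', P.trans x a μ' ∧ μ = μ'.map some) ∨
        (a = none ∧ x ∈ P.final ∧ μ = PMF.pure none)
  init := PMF.pure none
  final := {none}

/-- Probabilistic choice `P ⊕_p Q`: disjoint union with initial distribution
`p·μ₀ + (1−p)·ν₀`. -/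
noncomputable def pchoice {α σ τ' : Type} (p : ℝ≥0∞) (hp : p ≤ 1)
    (P : PAut α σ) (Q : PAut α τ') : PAut α (σ ⊕ τ') where
  trans := fun s a μ =>
    match s with
    | Sum.inl x => ∃ μ', P.trans x a μ' ∧ μ = μ'.map Sum.inl
    | Sum.inr y => ∃ ν', Q.trans y a ν' ∧ μ = ν'.map Sum.inr
  init := mix p hp (P.init.map Sum.inl) (Q.init.map Sum.inr)
  final := {s | (∃ x ∈ P.final, s = Sum.inl x) ∨ (∃ y ∈ Q.final, s = Sum.inr y)}

/-- CSP-style parallel composition `P ∥_A Q` synchronising on the frame `A`: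
actions in `A` must be performed jointly, all other actions (including τ) are
interleaved. -/
noncomputable def par {α σ τ' : Type} (A : Set α) (P : PAut α σ) (Q : PAut α τ') :
    PAut α (σ × τ') where
  trans := fun s a μπ => ∃ μ ν, μπ = pprod μ ν ∧
    ((∃ b ∈ A, a = some b ∧ P.trans s.1 a μ ∧ Q.trans s.2 a ν) ∨
     ((∀ b ∈ A, a ≠ some b) ∧ P.trans s.1 a μ ∧ ν = PMF.pure s.2) ∨
     ((∀ b ∈ A, a ≠ some b) ∧ Q.trans s.2 a ν ∧ μ = PMF.pure s.1))
  init := pprod P.init Q.init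
  final := {s | s.1 ∈ P.final ∧ s.2 ∈ Q.final}

theorem lift_iff {X Y : Type} (S : X → PMF Y → Prop) (μ : PMF X) (ν : PMF Y) :
    Lift S μ ν ↔ ∃ (p : PMF ℕ) (x : ℕ → X) (νs : ℕ → PMF Y),
      μ = p.bind (fun n => PMF.pure (x n)) ∧ (∀ n, S (x n) (νs n)) ∧ ν = p.bind νs := by
  constructor
  · rintro ⟨p, x, νs, h1, h2, h3, h4⟩
    obtain ⟨q, hq⟩ : ∃ q : PMF ℕ, ∀ n, q n = p n :=
      ⟨⟨p, ENNReal.summable.hasSum_iff.mpr h1⟩, fun _ => rfl⟩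
    refine ⟨q, x, νs, ?_, h3, ?_⟩
    · ext s
      rw [PMF.bind_apply, h2]
      simp only [hq]
    · ext s
      rw [PMF.bind_apply, h4]
      simp only [hq]
  · rintro ⟨p, x, νs, h2, h3, h4⟩
    refine ⟨p, x, νs, p.tsum_coe, ?_, h3, ?_⟩
    · intro s
      rw [h2, PMF.bind_apply]
    · intro s
      rw [h4, PMF.bind_apply]

theorem lift_map {X Y X' Y' : Type} {S : X → PMF Y → Prop} {T : X' → PMF Y' → Prop}
    (f : X → X') (g : Y → Y') (hST : ∀ x ν, S x ν → T (f x) (ν.map g))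
    {μ : PMF X} {ν : PMF Y} (h : Lift S μ ν) : Lift T (μ.map f) (ν.map g) := by
  rw [lift_iff] at h ⊢
  obtain ⟨p, x, νs, h2, h3, h4⟩ := h
  refine ⟨p, fun n => f (x n), fun n => (νs n).map g, ?_, fun n => hST _ _ (h3 n), ?_⟩
  · rw [h2, PMF.map_bind]
    simp only [PMF.pure_map]
  · rw [h4, PMF.map_bind]

theorem lift_pure {X Y : Type} {S : X → PMF Y → Prop} {x : X} {ν : PMF Y} (h : S x ν) :
    Lift S (PMF.pure x) ν := by
  rw [lift_iff]
  refine ⟨PMF.pure 0, fun _ => x, fun _ => ν, ?_, fun _ => h, ?_⟩ <;> simp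

theorem lift_const {X Y : Type} {S : X → PMF Y → Prop} {μ : PMF X} {ν : PMF Y}
    (h : ∀ x ∈ μ.support, S x ν) : Lift S μ ν := by
  rw [lift_iff]
  obtain ⟨x, hx⟩ := μ.support_countable.exists_eq_range μ.support_nonempty
  have hmem : ∀ n, x n ∈ μ.support := fun n => hx ▸ Set.mem_range_self n
  have hex : ∀ s, ∃ n, s ∈ μ.support → x n = s := by
    intro s
    by_cases hs : s ∈ μ.support
    · have hs' := hs
      rw [hx] at hs'
      obtain ⟨n, hn⟩ := hs'
      exact ⟨n, fun _ => hn⟩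
    · exact ⟨0, fun h => absurd h hs⟩
  choose e he using hex
  refine ⟨μ.map e, x, fun _ => ν, ?_, fun n => h _ (hmem n), ?_⟩
  · rw [PMF.bind_map]
    conv_lhs => rw [← PMF.bind_pure μ]
    ext t
    rw [PMF.bind_apply, PMF.bind_apply]
    refine tsum_congr fun s => ?_
    by_cases hs : s ∈ μ.support
    · simp only [Function.comp_apply, he s hs]
    · rw [PMF.mem_support_iff, not_not] at hs
      rw [hs, zero_mul, zero_mul]
  · rw [PMF.bind_const]

theorem step_pstar {α σ : Type} (Q : PAut α σ) (a : Option α) (x : σ) (ν : PMF σ)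
    (h : step Q a x ν) : step (pstar Q) a (some x) (ν.map some) := by
  rcases h with h | ⟨h1, h2⟩
  · exact Or.inl (Or.inl ⟨ν, h, rfl⟩)
  · refine Or.inr ⟨h1, ?_⟩
    rw [h2, PMF.pure_map]

theorem weakTau_pstar {α σ : Type} (Q : PAut α σ) {μ ν : PMF σ}
    (h : WeakTau Q μ ν) : WeakTau (pstar Q) (μ.map some) (ν.map some) := by
  unfold WeakTau at h ⊢
  exact Relation.ReflTransGen.lift (fun μ : PMF σ => μ.map some)
    (fun _ _ h => lift_map some some (step_pstar Q none) h) _ _ h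

/-- The simulation between the stars. -/
def starRel {σ₁ σ₂ : Type} (S : σ₁ → PMF σ₂ → Prop) : Option σ₁ → PMF (Option σ₂) → Prop
  | none, ν => ν = PMF.pure none
  | some x, ν => ∃ ν', S x ν' ∧ ν = ν'.map some

/-- simulation is a precongruence for Kleene star:
if `P ≤ Q` then `P* ≤ Q*`. -/
theorem sim_precongruence_star {α σ₁ σ₂ : Type}
    (P : PAut α σ₁) (Q : PAut α σ₂) (h : Sim P Q) :
    Sim (pstar P) (pstar Q) := by
  obtain ⟨S, hS⟩ := h
  have hlift : ∀ {μ ν}, Lift S μ ν → Lift (starRel S) (μ.map some) (ν.map some) :=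
    fun h => lift_map some some (fun x ν h => ⟨ν, h, rfl⟩) h
  refine ⟨starRel S, ?_, ?_, ?_⟩
  · exact ⟨PMF.pure none, Relation.ReflTransGen.refl, lift_pure rfl⟩
  · rintro (_ | x) a μ' ht ν hν
    · obtain ⟨rfl, rfl⟩ := ht
      obtain rfl : ν = PMF.pure none := hν
      obtain ⟨ν₀, h1, h2⟩ := hS.init
      exact ⟨ν₀.map some, ⟨PMF.pure none, Q.init.map some, Relation.ReflTransGen.refl,
        lift_pure (Or.inl ⟨rfl, rfl⟩), weakTau_pstar Q h1⟩, hlift h2⟩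
    · obtain ⟨ν₁, hν₁, rfl⟩ := hν
      rcases ht with ⟨μ₁, ht, rfl⟩ | ⟨rfl, hx, rfl⟩
      · obtain ⟨ν', ⟨ρ₁, ρ₂, h1, h2, h3⟩, h4⟩ := hS.step x a μ₁ ht ν₁ hν₁
        exact ⟨ν'.map some, ⟨ρ₁.map some, ρ₂.map some, weakTau_pstar Q h1,
          lift_map some some (step_pstar Q a) h2, weakTau_pstar Q h3⟩, hlift h4⟩
      · obtain ⟨ν', h1, h2⟩ := hS.final x ν₁ hx hν₁
        refine ⟨PMF.pure none, ⟨ν'.map some, PMF.pure none, weakTau_pstar Q h1,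
          lift_const ?_, Relation.ReflTransGen.refl⟩, lift_pure rfl⟩
        intro y hy
        rw [PMF.support_map] at hy
        obtain ⟨y, hy, rfl⟩ := hy
        exact Or.inl (Or.inr ⟨rfl, h2 y hy, rfl⟩)
  · rintro x ν hx hν
    obtain rfl : x = none := hx
    obtain rfl : ν = PMF.pure none := hν
    refine ⟨PMF.pure none, Relation.ReflTransGen.refl, ?_⟩
    intro y hy
    rw [PMF.support_pure] at hy
    exact hy

end PCKA
end

section
/- Probabilistic choice right-distributes over sequential composition up to simulation equivalence: for probabilistic automata P, Q, R with pairwise disjoint state spaces and every p ∈ [0,1], (P ⊕_p Q) · R ≡ P · R ⊕_p Q · R (where on the right the two occurrences of R are taken as disjoint copies). -/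
open scoped ENNReal

namespace PCKA

/-- Lifting along a common reparametrisation of both distributions. -/
theorem lift_of_map {X Y Z : Type} (S : X → PMF Y → Prop) (ρ : PMF Z) (f : Z → X) (g : Z → Y)
    (h : ∀ z, S (f z) (PMF.pure (g z))) : Lift S (ρ.map f) (ρ.map g) := by
  classical
  obtain ⟨d, hd⟩ := ρ.support_countable.exists_eq_range ρ.support_nonempty
  have hc : ∀ z, ∃ n, z ∈ ρ.support → d n = z := by
    intro z
    by_cases hz : z ∈ ρ.support
    · rw [hd] at hz
      obtain ⟨n, hn⟩ := hz
      exact ⟨n, fun _ => hn⟩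
    · exact ⟨0, fun h => absurd h hz⟩
  choose c hc using hc
  have hρ : (ρ.map c).map d = ρ := by
    rw [PMF.map_comp]
    conv_rhs => rw [← PMF.bind_pure ρ]
    ext t
    simp only [PMF.map, PMF.bind_apply, Function.comp]
    refine tsum_congr fun z => ?_
    by_cases hz : z ∈ ρ.support
    · rw [hc z hz]
    · rw [PMF.mem_support_iff, not_not] at hz
      simp [hz]
  refine ⟨ρ.map c, fun n => f (d n), fun n => PMF.pure (g (d n)), PMF.tsum_coe _, ?_,
    fun n => h _, ?_⟩
  · intro s
    conv_lhs => rw [← hρ, PMF.map_comp, PMF.map, PMF.bind_apply]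
    rfl
  · intro s
    conv_lhs => rw [← hρ, PMF.map_comp, PMF.map, PMF.bind_apply]
    rfl

/-- Simulations induced by a span of functions. -/
theorem sim_of_span {α σ τ' Z : Type} (P : PAut α σ) (Q : PAut α τ') (f : Z → σ) (g : Z → τ')
    (hinit : ∃ ρ : PMF Z, ρ.map f = P.init ∧ ρ.map g = Q.init)
    (hstep : ∀ z a μ, P.trans (f z) a μ →
      ∃ ρ : PMF Z, ρ.map f = μ ∧ Q.trans (g z) a (ρ.map g))
    (hfinal : ∀ z, f z ∈ P.final → g z ∈ Q.final) : Sim P Q := by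
  refine ⟨fun x ν => ∃ z, f z = x ∧ ν = PMF.pure (g z), ?_, ?_, ?_⟩
  · obtain ⟨ρ, h1, h2⟩ := hinit
    refine ⟨Q.init, Relation.ReflTransGen.refl, ?_⟩
    rw [← h1, ← h2]
    exact lift_of_map _ ρ f g fun z => ⟨z, rfl, rfl⟩
  · rintro x a μ hμ ν ⟨z, rfl, rfl⟩
    obtain ⟨ρ, rfl, h2⟩ := hstep z a μ hμ
    refine ⟨ρ.map g, ⟨PMF.pure (g z), ρ.map g, Relation.ReflTransGen.refl, ?_,
      Relation.ReflTransGen.refl⟩, lift_of_map _ ρ f g fun z => ⟨z, rfl, rfl⟩⟩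
    refine ⟨fun n => if n = 0 then 1 else 0, fun _ => g z, fun _ => ρ.map g, ?_, ?_,
      fun _ => Or.inl h2, ?_⟩
    · simp
    · intro s; rw [ENNReal.tsum_mul_right]; simp
    · intro s; rw [ENNReal.tsum_mul_right]; simp
  · rintro x ν hx ⟨z, rfl, rfl⟩
    refine ⟨_, Relation.ReflTransGen.refl, ?_⟩
    intro y hy
    rw [PMF.support_pure, Set.mem_singleton_iff] at hy
    rw [hy]
    exact hfinal z hx

theorem map_mix {X Y : Type} (p : ℝ≥0∞) (hp : p ≤ 1) (μ ν : PMF X) (f : X → Y) :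
    (mix p hp μ ν).map f = mix p hp (μ.map f) (ν.map f) := by
  ext y
  have e : ∀ (x : X), mix p hp μ ν x = p * μ x + (1 - p) * ν x := fun _ => rfl
  change _ = p * (μ.map f) y + (1 - p) * (ν.map f) y
  simp only [PMF.map, PMF.bind_apply, e]
  rw [← ENNReal.tsum_mul_left, ← ENNReal.tsum_mul_left, ← ENNReal.tsum_add]
  refine tsum_congr fun x => ?_
  ring

/-- Identify the two copies of the states of `R`. -/
def merge {A B C : Type} : (A ⊕ C) ⊕ (B ⊕ C) → (A ⊕ B) ⊕ C
  | Sum.inl (Sum.inl x) => Sum.inl (Sum.inl x)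
  | Sum.inl (Sum.inr z) => Sum.inr z
  | Sum.inr (Sum.inl y) => Sum.inl (Sum.inr y)
  | Sum.inr (Sum.inr z) => Sum.inr z

/-- probabilistic choice right-distributes over sequential
composition up to simulation equivalence: `(P ⊕_p Q) · R ≡ P · R ⊕_p Q · R`
(the two occurrences of `R` on the right are disjoint copies). -/
theorem pchoice_right_distrib_seq {α σ₁ σ₂ σ₃ : Type}
    (P : PAut α σ₁) (Q : PAut α σ₂) (R : PAut α σ₃)
    (p : ℝ≥0∞) (hp : p ≤ 1) :
    SimEquiv (pseq (pchoice p hp P Q) R)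
      (pchoice p hp (pseq P R) (pseq Q R)) := by
  have hinit : (pchoice p hp (pseq P R) (pseq Q R)).init.map merge
      = (pseq (pchoice p hp P Q) R).init := by
    simp only [pchoice, pseq, map_mix, PMF.map_comp]
    rfl
  constructor
  · refine sim_of_span _ _ merge id ⟨_, hinit, PMF.map_id _⟩ ?_ ?_
    · rintro ((x | z) | (y | z)) a μ hμ
      · rcases hμ with ⟨_, ⟨μ', h, rfl⟩, rfl⟩ | ⟨rfl, h, rfl⟩
        · refine ⟨(μ'.map Sum.inl).map Sum.inl, ?_, ?_⟩
          · simp only [PMF.map_comp]; rfl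
          · rw [PMF.map_id]; exact ⟨_, Or.inl ⟨_, h, rfl⟩, rfl⟩
        · refine ⟨(R.init.map Sum.inr).map Sum.inl, ?_, ?_⟩
          · simp only [PMF.map_comp]; rfl
          · rw [PMF.map_id]
            rcases h with ⟨x', h, e⟩ | ⟨x', h, e⟩
            · cases e; exact ⟨_, Or.inr ⟨rfl, h, rfl⟩, rfl⟩
            · cases e
      · obtain ⟨μ', h, rfl⟩ := hμ
        refine ⟨(μ'.map Sum.inr).map Sum.inl, ?_, ?_⟩
        · simp only [PMF.map_comp]; rfl
        · rw [PMF.map_id]; exact ⟨_, ⟨_, h, rfl⟩, rfl⟩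
      · rcases hμ with ⟨_, ⟨μ', h, rfl⟩, rfl⟩ | ⟨rfl, h, rfl⟩
        · refine ⟨(μ'.map Sum.inl).map Sum.inr, ?_, ?_⟩
          · simp only [PMF.map_comp]; rfl
          · rw [PMF.map_id]; exact ⟨_, Or.inl ⟨_, h, rfl⟩, rfl⟩
        · refine ⟨(R.init.map Sum.inr).map Sum.inr, ?_, ?_⟩
          · simp only [PMF.map_comp]; rfl
          · rw [PMF.map_id]
            rcases h with ⟨x', h, e⟩ | ⟨x', h, e⟩
            · cases e
            · cases e; exact ⟨_, Or.inr ⟨rfl, h, rfl⟩, rfl⟩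
      · obtain ⟨μ', h, rfl⟩ := hμ
        refine ⟨(μ'.map Sum.inr).map Sum.inr, ?_, ?_⟩
        · simp only [PMF.map_comp]; rfl
        · rw [PMF.map_id]; exact ⟨_, ⟨_, h, rfl⟩, rfl⟩
    · rintro ((x | z) | (y | z)) ⟨w, hw, e⟩
      · cases e
      · cases e; exact Or.inl ⟨_, ⟨_, hw, rfl⟩, rfl⟩
      · cases e
      · cases e; exact Or.inr ⟨_, ⟨_, hw, rfl⟩, rfl⟩
  · refine sim_of_span _ _ id merge ⟨_, PMF.map_id _, hinit⟩ ?_ ?_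
    · intro z a μ hμ
      refine ⟨μ, PMF.map_id _, ?_⟩
      rcases z with (x | z) | (y | z)
      · obtain ⟨_, ⟨μ', h, rfl⟩ | ⟨rfl, h, rfl⟩, rfl⟩ := hμ
        · refine Or.inl ⟨_, ⟨_, h, rfl⟩, ?_⟩
          simp only [PMF.map_comp]; rfl
        · refine Or.inr ⟨rfl, Or.inl ⟨_, h, rfl⟩, ?_⟩
          simp only [PMF.map_comp]; rfl
      · obtain ⟨_, ⟨μ', h, rfl⟩, rfl⟩ := hμ
        refine ⟨_, h, ?_⟩
        simp only [PMF.map_comp]; rfl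
      · obtain ⟨_, ⟨μ', h, rfl⟩ | ⟨rfl, h, rfl⟩, rfl⟩ := hμ
        · refine Or.inl ⟨_, ⟨_, h, rfl⟩, ?_⟩
          simp only [PMF.map_comp]; rfl
        · refine Or.inr ⟨rfl, Or.inr ⟨_, h, rfl⟩, ?_⟩
          simp only [PMF.map_comp]; rfl
      · obtain ⟨_, ⟨μ', h, rfl⟩, rfl⟩ := hμ
        refine ⟨_, h, ?_⟩
        simp only [PMF.map_comp]; rfl
    · rintro z (⟨_, ⟨w, hw, rfl⟩, rfl⟩ | ⟨_, ⟨w, hw, rfl⟩, rfl⟩)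
      · exact ⟨w, hw, rfl⟩
      · exact ⟨w, hw, rfl⟩

end PCKA
end
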